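/- arXiv:2603.18162 — 2 statements merged into one kernel-verified Lean document; each statement's English description precedes it below -/
import Mathlib

section
/- Let d ≥ 1 and D ≥ 3 be integers and let A ⊆ ℕ^d be of smooth type for D. If z ∈ ℕ^d satisfies |z| = (d−1)(D−2)·D, then z belongs to the (d−1)(D−2)-fold sumset (d−1)(D−2)·A. -/
open Pointwise

/-- The `s`-fold sumset of `A`: `0A = {0}` and `(s+1)A = A + sA`. -/
def sumset {M : Type*} [AddMonoid M] (A : Set M) : ℕ → Set M
  | 0 => {0}
  | s + 1 => A + sumset A s

/-- `A ⊆ ℕ^d` is of smooth type for `D`. -/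
def SmoothType (d D : ℕ) (A : Set (Fin d → ℕ)) : Prop :=
  (∀ a ∈ A, ∑ j, a j ≤ D) ∧
  (0 : Fin d → ℕ) ∈ A ∧
  (∀ i : Fin d, Pi.single i 1 ∈ A) ∧
  (∀ i : Fin d, Pi.single i (D - 1) ∈ A) ∧
  (∀ i j : Fin d, Pi.single i 1 + Pi.single j (D - 1) ∈ A)

/-!
Every sum of `N` vectors `εᵢ` and `N` vectors `(D - 1)εⱼ` lies in `NA`: pair up the summands, each
pair being an element of `A`. So `NA` contains `x + (D - 1)y` for all `x`, `y` of total `N`. To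
write `z` of total `ND` in this form it suffices to find `y` of total `N` with `(D - 1)y ≤ z`. The
largest candidate is `⌊z / (D - 1)⌋`; rounding loses at most `D - 2` in each coordinate, so its
total is at least `N` as soon as `(d - 1)(D - 2) ≤ N`.
-/

open Finset

lemma sumset_eq_nsmul {M : Type*} [AddMonoid M] (A : Set M) (n : ℕ) : sumset A n = n • A := by
  induction n with
  | zero => rw [sumset, zero_nsmul, Set.singleton_zero]
  | succ n ih => rw [sumset, ih, succ_nsmul']

section Pairing

variable {ι κ M : Type*} [Fintype ι] [Fintype κ] [AddCommMonoid M]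

lemma sum_nsmul_mem_nsmul_range (f : ι → M) (x : ι → ℕ) :
    ∑ i, x i • f i ∈ (∑ i, x i) • Set.range f := by
  rw [← sum_nsmul_assoc]
  exact Set.finsetSum_mem_finsetSum _ _ _ fun i _ => Set.nsmul_mem_nsmul (Set.mem_range_self i)

lemma sum_nsmul_add_sum_nsmul_mem_nsmul {f : ι → M} {g : κ → M} {A : Set M}
    (hA : ∀ i j, f i + g j ∈ A) {N : ℕ} {x : ι → ℕ} {y : κ → ℕ}
    (hx : ∑ i, x i = N) (hy : ∑ j, y j = N) :
    ∑ i, x i • f i + ∑ j, y j • g j ∈ N • A := by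
  have range_add_range_subset : Set.range f + Set.range g ⊆ A :=
    Set.add_subset_iff.2 (Set.forall_mem_range.2 fun i => Set.forall_mem_range.2 (hA i))
  apply Set.nsmul_subset_nsmul_left range_add_range_subset
  rw [nsmul_add]
  exact Set.add_mem_add (hx ▸ sum_nsmul_mem_nsmul_range f x) (hy ▸ sum_nsmul_mem_nsmul_range g y)

lemma add_nsmul_mem_nsmul_of_single_add_single_mem [DecidableEq ι] {c N : ℕ} {A : Set (ι → ℕ)}
    (hA : ∀ i j : ι, Pi.single i 1 + Pi.single j c ∈ A) {x y : ι → ℕ}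
    (hx : ∑ i, x i = N) (hy : ∑ i, y i = N) : x + c • y ∈ N • A := by
  have sum_single_c : ∑ j, y j • (Pi.single j c : ι → ℕ) = c • y := by
    simp only [← Pi.single_smul, smul_eq_mul, univ_sum_single, mul_comm _ c]
    rfl
  have sum_single_one : ∑ i, x i • (Pi.single i 1 : ι → ℕ) = x := by
    simp only [← Pi.single_smul, smul_eq_mul, mul_one, univ_sum_single]
  rw [← sum_single_c, ← sum_single_one]
  exact sum_nsmul_add_sum_nsmul_mem_nsmul hA hx hy

end Pairing

section Rounding

variable {ι : Type*} [Fintype ι]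

lemma exists_le_sum_eq (q : ι → ℕ) {N : ℕ} (hN : N ≤ ∑ i, q i) : ∃ y ≤ q, ∑ i, y i = N := by
  obtain ⟨y, hyq, hy⟩ := (Finsupp.equivFunOnFinite.symm q).exists_le_degree_eq N
    (by simpa [Finsupp.degree_eq_sum] using hN)
  exact ⟨y, hyq, by rw [← hy, Finsupp.degree_eq_sum]⟩

lemma sum_le_mul_sum_div_add (z : ι → ℕ) {c : ℕ} (hc : 0 < c) :
    ∑ i, z i ≤ c * ∑ i, z i / c + Fintype.card ι * (c - 1) := calc
  ∑ i, z i = c * ∑ i, z i / c + ∑ i, z i % c := by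
    simp only [mul_sum, ← sum_add_distrib, Nat.div_add_mod]
  _ ≤ c * ∑ i, z i / c + Fintype.card ι * (c - 1) := by
    gcongr
    exact sum_le_card_nsmul _ _ _ fun i _ => Nat.le_sub_one_of_lt (Nat.mod_lt _ hc)

lemma exists_nsmul_le_sum_eq (z : ι → ℕ) {c N : ℕ} (hc : 0 < c)
    (hN : c * N + Fintype.card ι * (c - 1) < ∑ i, z i + c) :
    ∃ y : ι → ℕ, c • y ≤ z ∧ ∑ i, y i = N := by
  have N_le_sum_div : N ≤ ∑ i, z i / c := by
    have := sum_le_mul_sum_div_add z hc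
    refine Nat.lt_succ_iff.1 (Nat.lt_of_mul_lt_mul_left (a := c) ?_)
    rw [Nat.mul_succ]
    omega
  obtain ⟨y, hy, hyN⟩ := exists_le_sum_eq (fun i => z i / c) N_le_sum_div
  exact ⟨y, fun i => (Nat.mul_le_mul_left c (hy i)).trans (Nat.mul_div_le _ _), hyN⟩

end Rounding

theorem stmt_1_general {ι : Type*} [Fintype ι] [DecidableEq ι] {D N : ℕ} (hD : 2 ≤ D)
    (hN : (Fintype.card ι - 1) * (D - 2) ≤ N) {A : Set (ι → ℕ)}
    (hA : ∀ i j : ι, Pi.single i 1 + Pi.single j (D - 1) ∈ A)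
    {z : ι → ℕ} (hz : ∑ i, z i = N * D) : z ∈ sumset A N := by
  obtain ⟨c, rfl⟩ : ∃ c, D = c + 2 := Nat.exists_eq_add_of_le' hD
  have rounding_loss_le : Fintype.card ι * c ≤ N + c := by
    simpa [Nat.sub_mul] using hN
  have lt_sum_add : (c + 1) * N + Fintype.card ι * c < ∑ i, z i + (c + 1) := by
    rw [hz]
    linarith
  obtain ⟨y, hyz, hy⟩ := exists_nsmul_le_sum_eq z c.succ_pos lt_sum_add
  obtain ⟨x, rfl⟩ := exists_add_of_le hyz
  have hx : ∑ i, x i = N := by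
    simp only [Pi.add_apply, Pi.smul_apply, smul_eq_mul, sum_add_distrib, ← mul_sum, hy] at hz
    linarith
  rw [sumset_eq_nsmul, add_comm]
  exact add_nsmul_mem_nsmul_of_single_add_single_mem hA hx hy

theorem stmt_1 (d D : ℕ) (hd : 1 ≤ d) (hD : 3 ≤ D)
    (A : Set (Fin d → ℕ)) (hA : SmoothType d D A)
    (z : Fin d → ℕ) (hz : ∑ j, z j = (d - 1) * (D - 2) * D) :
    z ∈ sumset A ((d - 1) * (D - 2)) := by
  obtain ⟨-, -, -, -, single_add_single_mem⟩ := hA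
  exact stmt_1_general (by omega) (by rw [Fintype.card_fin]) single_add_single_mem hz
end

section
/- Let d ≥ 1 and D ≥ 2 be integers and let A = {x ∈ ℕ^d : |x| ≤ D} = Δ₁. Then sA = Δ_s for every s ∈ ℕ, and the sumsets regularity of A equals σ(A) = d − ⌊d/D⌋. -/
open Pointwise

/-- The discrete simplex `Δ_s = {y ∈ ℕ^d : |y| ≤ sD}`. -/
def Delta (d D s : ℕ) : Set (Fin d → ℕ) := {y | ∑ j, y j ≤ s * D}

/-- The set `{0, Dε₁, …, Dε_d}`. -/
def Erays (d D : ℕ) : Set (Fin d → ℕ) :=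
  insert 0 (Set.range fun i : Fin d => Pi.single i D)

/-!
A point `y` with `|y| ≤ m + n` dominates a point `z` with `|z| = min m |y|`, and `y = z + (y - z)`
shows that the lattice points of simplices add up: `{|y| ≤ m} + {|y| ≤ n} = {|y| ≤ m + n}`.

A point `y` with `m < |y| ≤ m + D` is a point of `{|y| ≤ m}` plus a vector of `{0, Dε₁, …, Dε_d}`
exactly when some coordinate of `y` is at least `D`. All points with `|y| > m` have such a
coordinate exactly when `m` is at least the coordinate sum `d(D - 1)` of `(D - 1, …, D - 1)`, the
largest point without one. With `m = sD` this reads `dD - d ≤ sD`, that is, `d - s ≤ d / D`.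
-/

section Simplex

/-- The lattice points `{y ∈ ℕ^ι : |y| ≤ n}` of the dilated standard simplex. `Delta d D s` is
definitionally `latticeSimplex (Fin d) (s * D)`; an arbitrary bound `n` allows sums of simplices of
different sizes. -/
def latticeSimplex (ι : Type*) [Fintype ι] (n : ℕ) : Set (ι → ℕ) := {y | ∑ j, y j ≤ n}

/-- The set `{0} ∪ {Dεᵢ : i ∈ ι}` of vertices of `latticeSimplex ι D`; for
`ι = Fin d` it is definitionally `Erays d D`. -/
def simplexVertices (ι : Type*) [DecidableEq ι] (D : ℕ) : Set (ι → ℕ) :=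
  insert 0 (Set.range fun i : ι ↦ Pi.single i D)

variable {ι : Type*} [Fintype ι]

theorem mem_latticeSimplex {n : ℕ} {y : ι → ℕ} : y ∈ latticeSimplex ι n ↔ ∑ j, y j ≤ n := Iff.rfl

theorem latticeSimplex_zero : latticeSimplex ι 0 = {0} := by
  ext y
  simp [mem_latticeSimplex, funext_iff]

theorem exists_le_sum_eq_s7 (y : ι → ℕ) {n : ℕ} (hn : n ≤ ∑ j, y j) : ∃ z ≤ y, ∑ j, z j = n := by
  obtain ⟨z, hzy, hz⟩ := (Finsupp.equivFunOnFinite.symm y).exists_le_degree_eq n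
    (by simpa [Finsupp.degree_eq_sum] using hn)
  exact ⟨z, hzy, by rwa [← Finsupp.degree_eq_sum]⟩

theorem latticeSimplex_add_latticeSimplex (m n : ℕ) :
    latticeSimplex ι m + latticeSimplex ι n = latticeSimplex ι (m + n) := by
  ext y
  rw [Set.mem_add]
  constructor
  · rintro ⟨a, ha, b, hb, rfl⟩
    simpa only [mem_latticeSimplex, Pi.add_apply, Finset.sum_add_distrib] using add_le_add ha hb
  · intro hy
    rw [mem_latticeSimplex] at hy
    obtain ⟨z, hzy, hz⟩ := exists_le_sum_eq_s7 y (min_le_right m (∑ j, y j))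
    refine ⟨z, hz.trans_le (min_le_left _ _), y - z, ?_, add_tsub_cancel_of_le hzy⟩
    simp only [mem_latticeSimplex, Pi.sub_apply]
    rw [Finset.sum_tsub_distrib _ fun j _ ↦ hzy j, hz]
    omega

theorem sumset_latticeSimplex (n s : ℕ) :
    sumset (latticeSimplex ι n) s = latticeSimplex ι (s * n) := by
  induction s with
  | zero => rw [sumset, zero_mul, latticeSimplex_zero]
  | succ s ih => rw [sumset, ih, latticeSimplex_add_latticeSimplex, add_one_mul, add_comm]

variable [DecidableEq ι]

theorem mem_latticeSimplex_add_simplexVertices {m D : ℕ} {y : ι → ℕ} :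
    y ∈ latticeSimplex ι m + simplexVertices ι D ↔
      ∑ j, y j ≤ m ∨ (∃ i, D ≤ y i) ∧ ∑ j, y j ≤ m + D := by
  rw [Set.mem_add]
  constructor
  · rintro ⟨a, ha, b, rfl | ⟨i, rfl⟩, rfl⟩
    · rw [add_zero]
      exact .inl ha
    · rw [mem_latticeSimplex] at ha
      exact .inr ⟨⟨i, by simp⟩, by simpa [Finset.sum_add_distrib] using ha⟩
  · rintro (hy | ⟨⟨i, hi⟩, hy⟩)
    · exact ⟨y, hy, 0, .inl rfl, add_zero y⟩
    · have hle : Pi.single i D ≤ y := by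
        simpa [Pi.single, update_le_iff] using hi
      refine ⟨y - Pi.single i D, ?_, Pi.single i D, .inr ⟨i, rfl⟩, tsub_add_cancel_of_le hle⟩
      simp only [mem_latticeSimplex, Pi.sub_apply]
      rw [Finset.sum_tsub_distrib _ fun j _ ↦ hle j, Fintype.sum_pi_single']
      exact Nat.sub_le_of_le_add hy

theorem latticeSimplex_add_simplexVertices_eq_iff {m D : ℕ} :
    latticeSimplex ι m + simplexVertices ι D = latticeSimplex ι (m + D) ↔
      Fintype.card ι * (D - 1) ≤ m := by
  constructor
  · intro h
    by_contra! hlt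
    obtain ⟨y, hy, hsum⟩ := exists_le_sum_eq_s7 (fun _ : ι ↦ D - 1) (n := m + 1) (by simpa using hlt)
    have hD : 0 < D - 1 := Nat.pos_of_mul_pos_left (m.zero_le.trans_lt hlt)
    have hmem : y ∈ latticeSimplex ι (m + D) := by rw [mem_latticeSimplex]; omega
    rw [← h, mem_latticeSimplex_add_simplexVertices] at hmem
    obtain hle | ⟨⟨i, hi⟩, -⟩ := hmem
    · omega
    · have : y i ≤ D - 1 := hy i
      omega
  · intro hm
    ext y
    rw [mem_latticeSimplex_add_simplexVertices, mem_latticeSimplex]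
    have large_coord (hy : m < ∑ j, y j) : ∃ i, D ≤ y i := by
      obtain ⟨i, -, hi⟩ : ∃ i ∈ Finset.univ, D - 1 < y i :=
        Finset.exists_lt_of_sum_lt (by simpa using hm.trans_lt hy)
      exact ⟨i, Nat.le_of_pred_lt hi⟩
    grind

end Simplex

theorem mul_pred_le_mul_iff {d D s : ℕ} (hD : 0 < D) : d * (D - 1) ≤ s * D ↔ d - d / D ≤ s :=
  calc d * (D - 1) ≤ s * D
    _ ↔ d * D - d ≤ s * D := by rw [Nat.mul_sub_one]
    _ ↔ (d - s) * D ≤ d := by rw [tsub_le_iff_tsub_le, ← Nat.sub_mul]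
    _ ↔ d - s ≤ d / D := (Nat.le_div_iff_mul_le hD).symm
    _ ↔ d - d / D ≤ s := tsub_le_iff_tsub_le

theorem Delta_add_Erays_eq_iff {d D s : ℕ} (hD : 0 < D) :
    Delta d D s + Erays d D = Delta d D (s + 1) ↔ d - d / D ≤ s := by
  have h := latticeSimplex_add_simplexVertices_eq_iff (ι := Fin d) (m := s * D) (D := D)
  rwa [← add_one_mul, Fintype.card_fin, mul_pred_le_mul_iff hD] at h

theorem stmt_7 (d D : ℕ) (hd : 1 ≤ d) (hD : 2 ≤ D)
    (A : Set (Fin d → ℕ)) (hA : A = {x : Fin d → ℕ | ∑ j, x j ≤ D}) :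
    (∀ s : ℕ, sumset A s = Delta d D s) ∧
    IsLeast {s : ℕ | sumset A s = Delta d D s ∧
      Delta d D s + Erays d D = Delta d D (s + 1)} (d - d / D) := by
  have sumset_eq (s : ℕ) : sumset A s = Delta d D s := hA ▸ sumset_latticeSimplex D s
  have rays_iff (s : ℕ) : Delta d D s + Erays d D = Delta d D (s + 1) ↔ d - d / D ≤ s :=
    Delta_add_Erays_eq_iff (zero_lt_two.trans_le hD)
  exact ⟨sumset_eq, ⟨sumset_eq _, (rays_iff _).mpr le_rfl⟩, fun s hs ↦ (rays_iff s).mp hs.2⟩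
end
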